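/- Let d ≥ 1, let N ≥ 2, and let x_1, …, x_N be pairwise distinct points in ℝ^d with m := min_{i ≠ j} ‖x_i − x_j‖ > 0. Let π_1, …, π_N be weights with π_j > 0 for all j and ∑_{j=1}^N π_j = 1. Then for every bandwidth vector σ ∈ (0, ∞)^N, the weighted leave-one-out total log-likelihood satisfies ∑_{i=1}^N log( ∑_{j ≠ i} π_j · K_{σ_j}(x_i, x_j) ) ≤ N · log( (2π)^{-d/2} · d^{d/2} · e^{-d/2} · m^{-d} ). In particular the LOO-MLL objective for π-KDE is bounded above. -/

import Mathlib

/-- The isotropic Gaussian kernel on `ℝ^d` with center `μ` and bandwidth `σ`: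
`K_σ(x, μ) = (2πσ²)^{-d/2} · exp(−‖x − μ‖² / (2σ²))`. -/
noncomputable def gaussKernel (d : ℕ) (σ : ℝ) (x μ : EuclideanSpace ℝ (Fin d)) : ℝ :=
  (2 * Real.pi * σ ^ 2) ^ (-(d : ℝ) / 2) * Real.exp (-‖x - μ‖ ^ 2 / (2 * σ ^ 2))

/-!
At a fixed distance `r` from its center, the Gaussian kernel is, up to the factor
`(π r²)^(-d/2)`, the function `t ^ (d / 2) * exp (-t)` of `t = r² / (2σ²)`. This function is
maximal at `t = d / 2`, so off its center the kernel is bounded uniformly in the bandwidth. Leaving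
out the data point itself keeps every remaining kernel at positive distance, and a
combination of kernels with weights of total at most one inherits their common bound.
-/

lemma rpow_mul_exp_neg_le_rpow_mul_exp_neg {a t : ℝ} (ha : 0 ≤ a) (ht : 0 ≤ t) :
    t ^ a * Real.exp (-t) ≤ a ^ a * Real.exp (-a) := by
  obtain rfl | ha := ha.eq_or_lt
  · simpa using ht
  have tangent : t / a ≤ Real.exp (t / a - 1) := by
    simpa using Real.add_one_le_exp (t / a - 1)
  have power : t ^ a / a ^ a ≤ Real.exp (t - a) :=
    calc t ^ a / a ^ a = (t / a) ^ a := (Real.div_rpow ht ha.le a).symm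
      _ ≤ Real.exp (t / a - 1) ^ a := by gcongr
      _ = Real.exp (t - a) := by
        rw [← Real.exp_mul]
        congr 1
        field_simp
  calc t ^ a * Real.exp (-t) ≤ Real.exp (t - a) * a ^ a * Real.exp (-t) := by
        gcongr
        exact (div_le_iff₀ (by positivity)).mp power
    _ = a ^ a * (Real.exp (t - a) * Real.exp (-t)) := by ring
    _ = a ^ a * Real.exp (-a) := by
      rw [← Real.exp_add]
      ring_nf

/-- The maximum over all bandwidths `σ` of the Gaussian kernel on `ℝ^d` at distance `r > 0` from its
center, attained at `σ² = r² / d` for `d ≥ 1`. For `d = 0` the convention `0 ^ 0 = 1` makes it the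
supremum `1`. -/
noncomputable def gaussKernelBound (d : ℕ) (r : ℝ) : ℝ :=
  (2 * Real.pi) ^ (-(d : ℝ) / 2) * (d : ℝ) ^ ((d : ℝ) / 2) * Real.exp (-(d : ℝ) / 2) *
    r ^ (-(d : ℝ))

section GaussKernel

variable {d : ℕ} {r s σ : ℝ} {x μ : EuclideanSpace ℝ (Fin d)}

lemma gaussKernel_pos (hσ : σ ≠ 0) : 0 < gaussKernel d σ x μ := by
  unfold gaussKernel
  positivity

lemma gaussKernelBound_nonneg (hr : 0 ≤ r) : 0 ≤ gaussKernelBound d r := by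
  unfold gaussKernelBound
  positivity

lemma gaussKernelBound_le_of_le (hr : 0 < r) (hrs : r ≤ s) :
    gaussKernelBound d s ≤ gaussKernelBound d r :=
  mul_le_mul_of_nonneg_left
    (Real.rpow_le_rpow_of_nonpos hr hrs (neg_nonpos.mpr d.cast_nonneg)) (by positivity)

lemma gaussKernel_eq_rpow_mul_exp_neg (hσ : σ ≠ 0) (hx : x ≠ μ) :
    gaussKernel d σ x μ = (Real.pi * ‖x - μ‖ ^ 2) ^ (-(d : ℝ) / 2) *
      ((‖x - μ‖ ^ 2 / (2 * σ ^ 2)) ^ ((d : ℝ) / 2) *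
        Real.exp (-(‖x - μ‖ ^ 2 / (2 * σ ^ 2)))) := by
  have hr : 0 < ‖x - μ‖ := norm_sub_pos_iff.mpr hx
  have variance_eq : 2 * Real.pi * σ ^ 2 =
      Real.pi * ‖x - μ‖ ^ 2 * (‖x - μ‖ ^ 2 / (2 * σ ^ 2))⁻¹ := by
    field_simp
  rw [gaussKernel, variance_eq, Real.mul_rpow (by positivity) (by positivity),
    Real.inv_rpow (by positivity), ← Real.rpow_neg (by positivity), neg_div, neg_neg, neg_div,
    mul_assoc]

lemma gaussKernelBound_eq_rpow_mul_exp_neg (hr : 0 ≤ r) :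
    gaussKernelBound d r = (Real.pi * r ^ 2) ^ (-(d : ℝ) / 2) *
      (((d : ℝ) / 2) ^ ((d : ℝ) / 2) * Real.exp (-((d : ℝ) / 2))) := by
  have sq_rpow : (r ^ 2) ^ (-(d : ℝ) / 2) = r ^ (-(d : ℝ)) := by
    rw [← Real.rpow_natCast_mul hr]
    congr 1
    push_cast
    ring
  have half_rpow : ((d : ℝ) / 2) ^ ((d : ℝ) / 2) =
      (d : ℝ) ^ ((d : ℝ) / 2) * 2 ^ (-(d : ℝ) / 2) := by
    rw [Real.div_rpow (by positivity) (by positivity), neg_div, Real.rpow_neg (by positivity),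
      div_eq_mul_inv]
  rw [gaussKernelBound, Real.mul_rpow (by positivity) (by positivity),
    Real.mul_rpow (by positivity) (by positivity), sq_rpow, half_rpow, neg_div]
  ring

lemma gaussKernel_le_gaussKernelBound (hσ : σ ≠ 0) (hx : x ≠ μ) :
    gaussKernel d σ x μ ≤ gaussKernelBound d ‖x - μ‖ := by
  rw [gaussKernel_eq_rpow_mul_exp_neg hσ hx, gaussKernelBound_eq_rpow_mul_exp_neg (norm_nonneg _)]
  exact mul_le_mul_of_nonneg_left
    (rpow_mul_exp_neg_le_rpow_mul_exp_neg (by positivity) (by positivity)) (by positivity)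

end GaussKernel

lemma sum_mul_le_of_sum_le_one {ι R : Type*} [Semiring R] [PartialOrder R] [IsOrderedRing R]
    {s : Finset ι} {w f : ι → R} {B : R} (hw : ∀ j ∈ s, 0 ≤ w j) (hwsum : ∑ j ∈ s, w j ≤ 1)
    (hf : ∀ j ∈ s, f j ≤ B) (hB : 0 ≤ B) : ∑ j ∈ s, w j * f j ≤ B :=
  calc ∑ j ∈ s, w j * f j ≤ ∑ j ∈ s, w j * B :=
        Finset.sum_le_sum fun j hj ↦ mul_le_mul_of_nonneg_left (hf j hj) (hw j hj)
    _ = (∑ j ∈ s, w j) * B := (Finset.sum_mul ..).symm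
    _ ≤ B := mul_le_of_le_one_left hB hwsum

lemma log_sum_mul_gaussKernel_le {ι : Type*} {d : ℕ} {s : Finset ι} (hs : s.Nonempty)
    {x : ι → EuclideanSpace ℝ (Fin d)} {y : EuclideanSpace ℝ (Fin d)} {r : ℝ} (hr : 0 < r)
    (hy : ∀ j ∈ s, r ≤ ‖y - x j‖) {w σ : ι → ℝ} (hw : ∀ j ∈ s, 0 < w j)
    (hwsum : ∑ j ∈ s, w j ≤ 1) (hσ : ∀ j ∈ s, σ j ≠ 0) :
    Real.log (∑ j ∈ s, w j * gaussKernel d (σ j) y (x j)) ≤ Real.log (gaussKernelBound d r) := by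
  have kernel_le : ∀ j ∈ s, gaussKernel d (σ j) y (x j) ≤ gaussKernelBound d r := fun j hj ↦
    (gaussKernel_le_gaussKernelBound (hσ j hj)
      (norm_sub_pos_iff.mp (hr.trans_le (hy j hj)))).trans (gaussKernelBound_le_of_le hr (hy j hj))
  have density_pos : 0 < ∑ j ∈ s, w j * gaussKernel d (σ j) y (x j) :=
    Finset.sum_pos (fun j hj ↦ mul_pos (hw j hj) (gaussKernel_pos (hσ j hj))) hs
  exact Real.log_le_log density_pos <|
    sum_mul_le_of_sum_le_one (fun j hj ↦ (hw j hj).le) hwsum kernel_le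
      (gaussKernelBound_nonneg hr.le)

/-- The sharpest choice of `r i` is the distance from `x i` to its nearest neighbor. -/
theorem pikde_loo_mll_bounded_above_general {ι : Type*} [Fintype ι] [DecidableEq ι] [Nontrivial ι]
    {d : ℕ} {x : ι → EuclideanSpace ℝ (Fin d)} {r : ι → ℝ} (hr : ∀ i, 0 < r i)
    (hrx : ∀ i j, i ≠ j → r i ≤ ‖x i - x j‖) {w : ι → ℝ} (hw : ∀ j, 0 < w j)
    (hwsum : ∑ j, w j ≤ 1) {σ : ι → ℝ} (hσ : ∀ j, σ j ≠ 0) :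
    ∑ i, Real.log (∑ j ∈ Finset.univ.erase i, w j * gaussKernel d (σ j) (x i) (x j)) ≤
      ∑ i, Real.log (gaussKernelBound d (r i)) := by
  refine Finset.sum_le_sum fun i _ ↦ ?_
  have others_nonempty : (Finset.univ.erase i).Nonempty :=
    Finset.univ_nontrivial.erase_nonempty
  have others_weight : ∑ j ∈ Finset.univ.erase i, w j ≤ 1 :=
    (Finset.sum_le_univ_sum_of_nonneg fun j ↦ (hw j).le).trans hwsum
  exact log_sum_mul_gaussKernel_le others_nonempty (hr i)
    (fun j hj ↦ hrx i j (Finset.ne_of_mem_erase hj).symm) (fun j _ ↦ hw j) others_weight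
    (fun j _ ↦ hσ j)

/-- For pairwise distinct data points with minimum pairwise distance `m > 0` and positive
kernel weights summing to one, the leave-one-out total log-likelihood for π-KDE is bounded
above by `N · log ((2π)^{-d/2} · d^{d/2} · e^{-d/2} · m^{-d})` for every positive bandwidth
vector. -/
theorem pikde_loo_mll_bounded_above
    (d N : ℕ) (hd : 1 ≤ d) (hN : 2 ≤ N)
    (x : Fin N → EuclideanSpace ℝ (Fin d)) (hx : Function.Injective x)
    (m : ℝ) (hm : IsLeast {r : ℝ | ∃ i j : Fin N, i ≠ j ∧ r = ‖x i - x j‖} m) (hm0 : 0 < m)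
    (w : Fin N → ℝ) (hw : ∀ j, 0 < w j) (hwsum : ∑ j, w j = 1)
    (σ : Fin N → ℝ) (hσ : ∀ j, 0 < σ j) :
    ∑ i, Real.log (∑ j ∈ Finset.univ.erase i, w j * gaussKernel d (σ j) (x i) (x j)) ≤
      (N : ℝ) * Real.log ((2 * Real.pi) ^ (-(d : ℝ) / 2) *
        (d : ℝ) ^ ((d : ℝ) / 2) * Real.exp (-(d : ℝ) / 2) * m ^ (-(d : ℝ))) := by
  have : Nontrivial (Fin N) := Fin.nontrivial_iff_two_le.mpr hN
  simpa [gaussKernelBound] using pikde_loo_mll_bounded_above_general (r := fun _ ↦ m)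
    (fun _ ↦ hm0) (fun i j hij ↦ hm.2 ⟨i, j, hij, rfl⟩) hw hwsum.le fun j ↦ (hσ j).ne'
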